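/- Let n ≥ 1 and let f be an integrable function on ℝ^n. Then the local maximal function M^loc f is integrable on ℝ^n if and only if ∑_{k ∈ ℤ^n} ∫_{Q_k} |f_k(x)| (1 + ln₊(|f_k(x)|/μ_k)) dx < ∞ (where terms with μ_k = 0 are interpreted as 0). -/

import Mathlib

open MeasureTheory Real Set Metric ENNReal

noncomputable section

/-- `ℝ^n` with the Euclidean norm. -/
abbrev En (n : ℕ) := EuclideanSpace ℝ (Fin n)

/-- `ln₊ t = max (ln t) 0`. -/
def lnp (t : ℝ) : ℝ := max (Real.log t) 0

/-- The unit cube `Q = (-1/2, 1/2)^n`. -/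
def unitQ (n : ℕ) : Set (En n) := {x | ∀ i, -(1/2 : ℝ) < x i ∧ x i < 1/2}

/-- The dilate `φ_t(y) = t^{-n} φ(y/t)` convolved with `f` at `x`:
`(φ_t ∗ f)(x) = ∫ t^{-n} φ((x-y)/t) f(y) dy`. -/
def phiConv (n : ℕ) (φ f : En n → ℝ) (t : ℝ) (x : En n) : ℝ :=
  ∫ y, (t ^ n)⁻¹ * φ (t⁻¹ • (x - y)) * f y

/-- The maximal function `𝓜_φ f(x) = sup_{t>0} |(φ_t ∗ f)(x)|`. -/
def Mphi (n : ℕ) (φ f : En n → ℝ) (x : En n) : ℝ :=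
  ⨆ t : {t : ℝ // 0 < t}, |phiConv n φ f t.1 x|

/-- A smooth function supported in the closed unit ball with integral `1`. -/
def IsTestFun (n : ℕ) (φ : En n → ℝ) : Prop :=
  ContDiff ℝ (⊤ : ℕ∞) φ ∧ (∀ x, x ∉ Metric.closedBall (0 : En n) 1 → φ x = 0) ∧ (∫ x, φ x) = 1

/-- Membership in the Hardy space `H^1(ℝ^n)`: the maximal function `𝓜_φ f` is
integrable for every admissible `φ`. -/
def MemH1 (n : ℕ) (f : En n → ℝ) : Prop :=
  ∀ φ : En n → ℝ, IsTestFun n φ → Integrable (Mphi n φ f)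

/-- The cube `Q_k = k + Q` for `k ∈ ℤ^n`. -/
def Qk (n : ℕ) (k : Fin n → ℤ) : Set (En n) :=
  {x | ∀ i, (k i : ℝ) - 1/2 < x i ∧ x i < (k i : ℝ) + 1/2}

/-- The lattice point `k ∈ ℤ^n` viewed as a point of `ℝ^n`. -/
def zv (n : ℕ) (k : Fin n → ℤ) : En n :=
  (EuclideanSpace.equiv (Fin n) ℝ).symm (fun i => (k i : ℝ))

/-- `μ_k = ‖f_k‖_{L^1} = ∫_{Q_k} |f|`. -/
def muk (n : ℕ) (f : En n → ℝ) (k : Fin n → ℤ) : ℝ := ∫ x in Qk n k, |f x|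

/-- The local Hardy–Littlewood maximal function
`M^loc f(x) = sup_{0<r<1} r^{-n} ∫_{|y-x|<r} |f(y)| dy`. -/
def Mloc (n : ℕ) (f : En n → ℝ) (x : En n) : ℝ :=
  ⨆ r : Set.Ioo (0 : ℝ) 1, ((r : ℝ) ^ n)⁻¹ * ∫ y in Metric.ball x (r : ℝ), |f y|

open Filter Topology

/-- volume of the unit ball -/
def vv (n : ℕ) : ℝ := (volume (ball (0 : En n) 1)).toReal

/-- maximal function of a measure -/
def MM (n : ℕ) (ν : Measure (En n)) (x : En n) : ℝ≥0∞ :=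
  ⨆ r : Set.Ioo (0 : ℝ) 1, (ENNReal.ofReal ((r : ℝ) ^ n))⁻¹ * ν (ball x (r : ℝ))

lemma vv_pos (n : ℕ) : 0 < vv n :=
  ENNReal.toReal_pos (measure_ball_pos volume _ one_pos).ne' measure_ball_lt_top.ne

lemma vol_ball (n : ℕ) (x : En n) {r : ℝ} (hr : 0 < r) :
    volume (ball x r) = ENNReal.ofReal (r ^ n * vv n) := by
  rw [Measure.addHaar_ball_of_pos volume x hr, ENNReal.ofReal_mul (by positivity), vv,
    ENNReal.ofReal_toReal measure_ball_lt_top.ne]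
  simp

lemma MM_meas (n : ℕ) (ν : Measure (En n)) : Measurable (MM n ν) := by
  apply LowerSemicontinuous.measurable
  unfold MM
  apply lowerSemicontinuous_iSup
  rintro ⟨r, hr0, hr1⟩
  have hlsc : LowerSemicontinuous (fun x : En n => ν (ball x r)) := by
    intro x c hc
    have hU : ball x r = ⋃ j : ℕ, ball x (r - 1 / ((j : ℝ) + 1)) := by
      ext y
      simp only [mem_ball, mem_iUnion]
      constructor
      · intro h
        obtain ⟨j, hj⟩ := exists_nat_one_div_lt (sub_pos.2 h)
        exact ⟨j, by linarith⟩
      · rintro ⟨j, hj⟩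
        have : 0 < 1 / ((j : ℝ) + 1) := by positivity
        linarith
    have hmono : Monotone (fun j : ℕ => ball x (r - 1 / ((j : ℝ) + 1))) := by
      intro i j hij
      apply ball_subset_ball
      have : 1 / ((j : ℝ) + 1) ≤ 1 / ((i : ℝ) + 1) := by
        apply one_div_le_one_div_of_le (by positivity)
        have : (i : ℝ) ≤ j := by exact_mod_cast hij
        linarith
      linarith
    have hc' : c < ν (ball x r) := hc
    rw [hU, hmono.measure_iUnion, lt_iSup_iff] at hc'
    obtain ⟨j, hj⟩ := hc'
    have hp : 0 < 1 / ((j : ℝ) + 1) := by positivity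
    filter_upwards [ball_mem_nhds x hp] with y hy
    refine hj.trans_le (measure_mono (ball_subset_ball' ?_))
    rw [mem_ball, dist_comm] at hy
    linarith
  intro x c hc
  have hne : (ENNReal.ofReal (r ^ n)) ≠ 0 := by simp; positivity
  have hk : ∀ y, (c < (ENNReal.ofReal (r ^ n))⁻¹ * ν (ball y r)) ↔
      ENNReal.ofReal (r ^ n) * c < ν (ball y r) := by
    intro y
    rw [← ENNReal.div_eq_inv_mul, ENNReal.lt_div_iff_mul_lt (Or.inl hne) (Or.inl ENNReal.ofReal_ne_top), mul_comm]
  simp only [hk] at hc ⊢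
  exact hlsc x _ hc

lemma le_MM (n : ℕ) (ν : Measure (En n)) (x : En n) {r : ℝ} (h0 : 0 < r) (h1 : r < 1) :
    ν (ball x r) ≤ ENNReal.ofReal (r ^ n) * MM n ν x := by
  have hne : (ENNReal.ofReal (r ^ n)) ≠ 0 := by simp; positivity
  have := le_iSup (fun r : Set.Ioo (0 : ℝ) 1 =>
    (ENNReal.ofReal ((r : ℝ) ^ n))⁻¹ * ν (ball x (r : ℝ))) ⟨r, h0, h1⟩
  rw [← ENNReal.inv_mul_le_iff hne ENNReal.ofReal_ne_top]
  exact this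

lemma MM_le (n : ℕ) (ν : Measure (En n)) (x : En n) (c : ℝ≥0∞)
    (h : ∀ r, 0 < r → r < 1 → ν (ball x r) ≤ ENNReal.ofReal (r ^ n) * c) : MM n ν x ≤ c := by
  apply iSup_le
  rintro ⟨r, h0, h1⟩
  have hne : (ENNReal.ofReal (r ^ n)) ≠ 0 := by simp; positivity
  rw [ENNReal.inv_mul_le_iff hne ENNReal.ofReal_ne_top]
  exact h r h0 h1

lemma lt_MM (n : ℕ) (ν : Measure (En n)) (x : En n) (s : ℝ≥0∞) (h : s < MM n ν x) :
    ∃ r, 0 < r ∧ r < 1 ∧ ENNReal.ofReal (r ^ n) * s ≤ ν (ball x r) := by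
  unfold MM at h
  rw [lt_iSup_iff] at h
  obtain ⟨⟨r, h0, h1⟩, h⟩ := h
  have hne : (ENNReal.ofReal (r ^ n)) ≠ 0 := by simp; positivity
  refine ⟨r, h0, h1, ?_⟩
  rw [← ENNReal.div_eq_inv_mul, ENNReal.lt_div_iff_mul_lt (Or.inl hne) (Or.inl ENNReal.ofReal_ne_top), mul_comm] at h
  exact h.le

/-- covering lemma: compare two measures. -/
lemma cover (n : ℕ) (μ ν : Measure (En n)) (S T : Set (En n)) (r : En n → ℝ) (C : ℝ≥0∞)
    (hr0 : ∀ x ∈ S, 0 < r x) (hr1 : ∀ x ∈ S, r x ≤ 1)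
    (h : ∀ x ∈ S, μ (ball x (5 * r x)) ≤ C * ν (ball x (r x)))
    (hT : ∀ x ∈ S, ball x (r x) ⊆ T) :
    μ S ≤ C * ν T := by
  obtain ⟨u, huS, hdis, hcov⟩ := Vitali.exists_disjoint_subfamily_covering_enlargement_ball
    S (fun x => x) r 1 hr1 5 (by norm_num)
  have hcount : u.Countable := hdis.countable_of_isOpen (fun _ _ => isOpen_ball)
    (fun x hx => ⟨x, mem_ball_self (hr0 x (huS hx))⟩)
  have hsub : S ⊆ ⋃ b ∈ u, ball b (5 * r b) := by
    intro a ha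
    obtain ⟨b, hb, hab⟩ := hcov a ha
    exact mem_biUnion hb (hab (mem_ball_self (hr0 a ha)))
  calc μ S ≤ μ (⋃ b ∈ u, ball b (5 * r b)) := measure_mono hsub
    _ ≤ ∑' b : u, μ (ball (b : En n) (5 * r b)) := measure_biUnion_le _ hcount _
    _ ≤ ∑' b : u, C * ν (ball (b : En n) (r b)) := ENNReal.tsum_le_tsum fun b => h b (huS b.2)
    _ = C * ν (⋃ b ∈ u, ball b (r b)) := by
      rw [ENNReal.tsum_mul_left, measure_biUnion hcount hdis (fun _ _ => measurableSet_ball)]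
    _ ≤ C * ν T := by
      gcongr
      exact iUnion₂_subset fun b hb => hT b (huS hb)

lemma weak (n : ℕ) (ν : Measure (En n)) (s : ℝ≥0∞) (hs0 : s ≠ 0) (hs : s ≠ ⊤) :
    s * volume {x | s < MM n ν x} ≤ ENNReal.ofReal (5 ^ n * vv n) * ν univ := by
  have := vv_pos n
  have H : ∀ x : En n, ∃ r : ℝ, s < MM n ν x →
      0 < r ∧ r < 1 ∧ ENNReal.ofReal (r ^ n) * s ≤ ν (ball x r) := by
    intro x
    by_cases h : s < MM n ν x
    · obtain ⟨r, hr⟩ := lt_MM n ν x s h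
      exact ⟨r, fun _ => hr⟩
    · exact ⟨0, fun h' => absurd h' h⟩
  choose r hr using H
  have key := cover n volume ν {x | s < MM n ν x} univ r (ENNReal.ofReal (5 ^ n * vv n) / s)
    (fun x hx => (hr x hx).1) (fun x hx => (hr x hx).2.1.le) ?_ (fun _ _ => subset_univ _)
  · calc _ ≤ s * (ENNReal.ofReal (5 ^ n * vv n) / s * ν univ) := by gcongr
      _ = _ := by rw [← mul_assoc, ENNReal.mul_div_cancel hs0 hs]
  · intro x hx
    obtain ⟨h0, h1, h2⟩ := hr x hx
    rw [vol_ball n x (by positivity)]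
    calc ENNReal.ofReal ((5 * r x) ^ n * vv n)
        = ENNReal.ofReal (5 ^ n * vv n) / s * (ENNReal.ofReal (r x ^ n) * s) := by
          rw [mul_comm _ s, ← mul_assoc, ENNReal.div_mul_cancel hs0 hs,
            ← ENNReal.ofReal_mul (by positivity)]
          congr 1; ring
      _ ≤ _ := by gcongr

lemma lebesgue (n : ℕ) (g : En n → ℝ≥0∞) (hg : Measurable g) (ν : Measure (En n))
    [IsFiniteMeasure ν] (hν : ν = volume.withDensity g) :
    ∀ᵐ x ∂(volume : Measure (En n)),
      Tendsto (fun r => ν (ball x r) / volume (ball x r)) (𝓝[>] 0) (𝓝 (g x)) := by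
  have h1 := Besicovitch.ae_tendsto_rnDeriv ν (volume : Measure (En n))
  have h2 : ν.rnDeriv volume =ᵐ[volume] g := by rw [hν]; exact Measure.rnDeriv_withDensity _ hg
  filter_upwards [h1, h2] with x hx hx2
  rw [hx2] at hx
  refine hx.congr' ?_
  filter_upwards [self_mem_nhdsWithin] with r hr
  have hr : 0 < r := hr
  have hsp : volume (sphere x r) = 0 := Measure.addHaar_sphere_of_ne_zero _ x hr.ne'
  have hsp' : ν (sphere x r) = 0 := by
    rw [hν]; exact withDensity_absolutelyContinuous _ _ hsp
  have e : ∀ κ : Measure (En n), κ (sphere x r) = 0 → κ (closedBall x r) = κ (ball x r) := by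
    intro κ hκ
    apply le_antisymm
    · rw [← ball_union_sphere]
      exact (measure_union_le _ _).trans (by simp [hκ])
    · exact measure_mono ball_subset_closedBall
  rw [e _ hsp, e _ hsp']

lemma dens_le (n : ℕ) (g : En n → ℝ≥0∞) (hg : Measurable g) (ν : Measure (En n))
    [IsFiniteMeasure ν] (hν : ν = volume.withDensity g) :
    ENNReal.ofReal (vv n) * ν univ ≤ ∫⁻ x, MM n ν x := by
  have := vv_pos n
  have hv : ENNReal.ofReal (vv n) ≠ 0 := by simpa using this
  rw [hν, withDensity_apply _ MeasurableSet.univ, Measure.restrict_univ, ← hν,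
    ← lintegral_const_mul _ hg]
  apply lintegral_mono_ae
  filter_upwards [lebesgue n g hg ν hν] with x hx
  rw [mul_comm, ← ENNReal.le_div_iff_mul_le (Or.inl hv) (Or.inl ENNReal.ofReal_ne_top)]
  apply le_of_tendsto hx
  filter_upwards [Ioo_mem_nhdsGT (zero_lt_one' ℝ)] with r hr
  have hrn := pow_pos hr.1 n
  rw [vol_ball n x hr.1]
  have := le_MM n ν x hr.1 hr.2
  apply ENNReal.div_le_of_le_mul
  refine this.trans (le_of_eq ?_)
  rw [mul_comm (r ^ n), ENNReal.ofReal_mul (by positivity), ← mul_assoc,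
    ENNReal.div_mul_cancel hv ENNReal.ofReal_ne_top, mul_comm]

lemma lower (n : ℕ) (g : En n → ℝ≥0∞) (hg : Measurable g) (ν : Measure (En n))
    [IsFiniteMeasure ν] (hν : ν = volume.withDensity g) (t : ℝ) (ht : 0 < t)
    (hm : ν univ ≤ ENNReal.ofReal (t * ((1 / 4) ^ n * vv n))) :
    ν {x | ENNReal.ofReal t < g x} ≤ ENNReal.ofReal (t * 5 ^ n) *
      volume {x | ENNReal.ofReal (t * ((1 / 2) ^ n * vv n)) < MM n ν x} := by
  have hv := vv_pos n
  set S : Set (En n) := {x | ENNReal.ofReal t < g x ∧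
      Tendsto (fun r => ν (ball x r) / volume (ball x r)) (𝓝[>] 0) (𝓝 (g x))}
  have hSS : ν {x | ENNReal.ofReal t < g x} ≤ ν S := by
    apply measure_mono_ae
    have : ν ≪ volume := by rw [hν]; exact withDensity_absolutelyContinuous _ _
    filter_upwards [this.ae_le (lebesgue n g hg ν hν)] with x hx h
    exact ⟨h, hx⟩
  refine hSS.trans ?_
  have H : ∀ x, ∃ r : ℝ, x ∈ S → 0 < r ∧ r < 1 / 4 ∧
      ENNReal.ofReal (t * (r ^ n * vv n)) < ν (ball x r) ∧
      ν (ball x (5 * r)) ≤ ENNReal.ofReal (t * ((5 * r) ^ n * vv n)) := by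
    intro x
    by_cases hx : x ∈ S
    swap
    · exact ⟨0, fun h => absurd h hx⟩
    have hev := (hx.2.eventually (lt_mem_nhds hx.1)).and self_mem_nhdsWithin
    obtain ⟨r₀, h1, h0⟩ := hev.exists
    have h0 : 0 < r₀ := h0
    have hb : ∀ r : ℝ, 0 < r → ENNReal.ofReal (t * (r ^ n * vv n)) < ν (ball x r) → r < 1 / 4 := by
      intro r hr h
      have h2 := (h.trans_le (measure_mono (subset_univ _))).trans_le hm
      rw [ENNReal.ofReal_lt_ofReal_iff (by positivity)] at h2
      have h3 : r ^ n < (1 / 4) ^ n := by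
        have := lt_of_mul_lt_mul_left h2 ht.le
        exact lt_of_mul_lt_mul_right this hv.le
      exact lt_of_pow_lt_pow_left₀ n (by norm_num) h3
    by_contra hcon
    push Not at hcon
    have hall : ∀ j : ℕ, ENNReal.ofReal (t * ((5 ^ j * r₀) ^ n * vv n)) < ν (ball x (5 ^ j * r₀)) := by
      intro j
      induction j with
      | zero =>
        rw [vol_ball n x h0] at h1
        have hpos : 0 < r₀ ^ n * vv n := by positivity
        rw [ENNReal.lt_div_iff_mul_lt (Or.inl (by simpa using hpos)) (Or.inl ENNReal.ofReal_ne_top),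
          ← ENNReal.ofReal_mul ht.le] at h1
        simpa using h1
      | succ j ih =>
        have := (hcon (5 ^ j * r₀)).2 (by positivity) (hb _ (by positivity) ih) ih
        rw [pow_succ, mul_comm _ (5 : ℝ), mul_assoc]
        exact this
    obtain ⟨j, hj⟩ := pow_unbounded_of_one_lt (1 / r₀) (by norm_num : (1 : ℝ) < 5)
    have := hb _ (by positivity) (hall j)
    rw [div_lt_iff₀ h0] at hj
    linarith
  choose r hr using H
  apply cover n ν volume S _ r _ (fun x hx => (hr x hx).1) (fun x hx => by linarith [(hr x hx).2.1])
  · intro x hx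
    obtain ⟨h0, h1, h2, h3⟩ := hr x hx
    rw [vol_ball n x h0, ← ENNReal.ofReal_mul (by positivity)]
    refine h3.trans (le_of_eq ?_)
    congr 1; ring
  · intro x hx y hy
    obtain ⟨h0, h1, h2, h3⟩ := hr x hx
    have hsub : ball x (r x) ⊆ ball y (2 * r x) := by
      apply ball_subset_ball'
      rw [mem_ball, dist_comm] at hy
      linarith
    have h4 := le_MM n ν y (r := 2 * r x) (by linarith) (by linarith)
    have h5 := h2.trans_le ((measure_mono hsub).trans h4)
    have hp : 0 < (2 * r x) ^ n := by positivity
    rw [mem_ofPred_eq, ← ENNReal.mul_lt_mul_iff_right (a := ENNReal.ofReal ((2 * r x) ^ n)) (by simpa using hp) ENNReal.ofReal_ne_top,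
      ← ENNReal.ofReal_mul hp.le]
    refine lt_of_eq_of_lt ?_ h5
    congr 1
    rw [mul_pow]
    have : (2 : ℝ) ^ n * (1 / 2) ^ n = 1 := by rw [← mul_pow]; norm_num
    linear_combination (t * r x ^ n * vv n) * this

lemma layer (n : ℕ) (F : En n → ℝ≥0∞) (hF : Measurable F) :
    ∫⁻ x, F x = ∫⁻ t in Ioi (0 : ℝ), volume {x | ENNReal.ofReal t < F x} := by
  have h1 : ∀ x, F x = ∫⁻ t in Ioi (0 : ℝ), {p : En n × ℝ | ENNReal.ofReal p.2 < F p.1}.indicator 1 (x, t) := by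
    intro x
    have e : (fun t : ℝ => {p : En n × ℝ | ENNReal.ofReal p.2 < F p.1}.indicator (1 : En n × ℝ → ℝ≥0∞) (x, t))
      = {t : ℝ | ENNReal.ofReal t < F x}.indicator 1 := by
      ext t; simp [indicator]
    have hm : MeasurableSet {t : ℝ | ENNReal.ofReal t < F x} :=
      measurableSet_lt ENNReal.measurable_ofReal measurable_const
    rw [e, lintegral_indicator_one hm, Measure.restrict_apply hm]
    by_cases hx : F x = ⊤
    · simp [hx]
    · have : {t : ℝ | ENNReal.ofReal t < F x} ∩ Ioi 0 = Ioo 0 (F x).toReal := by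
        ext t
        simp only [mem_inter_iff, mem_ofPred_eq, mem_Ioi, mem_Ioo]
        constructor
        · rintro ⟨h1, h2⟩
          exact ⟨h2, (ENNReal.ofReal_lt_iff_lt_toReal h2.le hx).1 h1⟩
        · rintro ⟨h1, h2⟩
          exact ⟨(ENNReal.ofReal_lt_iff_lt_toReal h1.le hx).2 h2, h1⟩
      rw [this]
      simp [hx]
  have hS : MeasurableSet {p : En n × ℝ | ENNReal.ofReal p.2 < F p.1} :=
    measurableSet_lt (ENNReal.measurable_ofReal.comp measurable_snd) (hF.comp measurable_fst)
  calc ∫⁻ x, F x = ∫⁻ x, ∫⁻ t in Ioi (0 : ℝ), {p : En n × ℝ | ENNReal.ofReal p.2 < F p.1}.indicator 1 (x, t) :=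
        lintegral_congr h1
    _ = ∫⁻ t in Ioi (0 : ℝ), ∫⁻ x, {p : En n × ℝ | ENNReal.ofReal p.2 < F p.1}.indicator 1 (x, t) := by
        apply lintegral_lintegral_swap
        exact (measurable_one.indicator hS).aemeasurable
    _ = _ := by
        apply lintegral_congr
        intro t
        have e : (fun x => {p : En n × ℝ | ENNReal.ofReal p.2 < F p.1}.indicator (1 : En n × ℝ → ℝ≥0∞) (x, t))
          = {x | ENNReal.ofReal t < F x}.indicator 1 := by
          ext t; simp [indicator]
        rw [e, lintegral_indicator_one (measurableSet_lt measurable_const hF)]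

lemma log_int (u b : ℝ) (hu : 0 ≤ u) (hb : 0 < b) :
    ∫⁻ t in Ioi b, (Iio u).indicator (fun t => ENNReal.ofReal (1 / t)) t
      = ENNReal.ofReal (lnp (u / b)) := by
  rw [lintegral_indicator measurableSet_Iio, Measure.restrict_restrict measurableSet_Iio,
    Iio_inter_Ioi]
  rcases le_or_gt u b with h | h
  · rw [Ioo_eq_empty (by simpa using h)]
    have : Real.log (u / b) ≤ 0 := Real.log_nonpos (by positivity) ((div_le_one hb).2 h)
    simp [lnp, this]
  · have hu : 0 < u := hb.trans h
    have h1 : 1 ≤ u / b := (one_le_div hb).2 h.le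
    rw [lnp, max_eq_left (Real.log_nonneg h1), ← integral_one_div_of_pos hb hu,
      intervalIntegral.integral_of_le h.le, integral_Ioc_eq_integral_Ioo,
      ofReal_integral_eq_lintegral_ofReal]
    · have : IntervalIntegrable (fun x : ℝ => 1 / x) volume b u := by
        apply intervalIntegral.intervalIntegrable_one_div
        · intro x hx
          rw [uIcc_of_le h.le] at hx
          linarith [hx.1]
        · exact continuousOn_id
      exact (this.1).mono_set Ioo_subset_Ioc_self
    · filter_upwards [ae_restrict_mem measurableSet_Ioo] with x hx
      have : 0 < x := hb.trans hx.1
      simp; positivity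

lemma lnp_swap (n : ℕ) (ν : Measure (En n)) [SFinite ν] (h : En n → ℝ) (hh : Measurable h)
    (h0 : ∀ x, 0 ≤ h x) (b : ℝ) (hb : 0 < b) :
    ∫⁻ x, ENNReal.ofReal (lnp (h x / b)) ∂ν
      = ∫⁻ t in Ioi b, ENNReal.ofReal (1 / t) * ν {x | t < h x} := by
  have hS : MeasurableSet {p : En n × ℝ | p.2 < h p.1} :=
    measurableSet_lt measurable_snd (hh.comp measurable_fst)
  calc ∫⁻ x, ENNReal.ofReal (lnp (h x / b)) ∂ν
      = ∫⁻ x, (∫⁻ t in Ioi b, {p : En n × ℝ | p.2 < h p.1}.indicator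
          (fun p => ENNReal.ofReal (1 / p.2)) (x, t)) ∂ν := by
        apply lintegral_congr
        intro x
        rw [← log_int _ b (h0 x) hb]
        apply lintegral_congr
        intro t
        simp [indicator]
    _ = ∫⁻ t in Ioi b, ∫⁻ x, {p : En n × ℝ | p.2 < h p.1}.indicator
          (fun p => ENNReal.ofReal (1 / p.2)) (x, t) ∂ν := by
        apply lintegral_lintegral_swap
        refine (Measurable.indicator ?_ hS).aemeasurable
        fun_prop
    _ = _ := by
        apply lintegral_congr
        intro t
        have e : (fun x => {p : En n × ℝ | p.2 < h p.1}.indicator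
            (fun p => ENNReal.ofReal (1 / p.2)) (x, t))
          = {x | t < h x}.indicator (fun _ => ENNReal.ofReal (1 / t)) := by
          ext t; simp [indicator]
        rw [e, lintegral_indicator_const (measurableSet_lt measurable_const hh)]

lemma claimA (n : ℕ) (h : En n → ℝ) (hh : Measurable h) (h0 : ∀ x, 0 ≤ h x)
    (ν : Measure (En n)) [IsFiniteMeasure ν]
    (hν : ν = volume.withDensity (fun x => ENNReal.ofReal (h x))) (m : ℝ) (hm : 0 < m)
    (N : Set (En n)) (hN : ∀ x, x ∉ N → MM n ν x = 0) :
    ∫⁻ x, MM n ν x ≤ ENNReal.ofReal (2 * vv n * m) * volume N +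
      ENNReal.ofReal (2 * (5 ^ n * vv n)) * ∫⁻ x, ENNReal.ofReal (lnp (h x / m)) ∂ν := by
  have hv := vv_pos n
  have hT : 0 < 2 * vv n * m := by positivity
  rw [layer n _ (MM_meas n ν), ← Ioc_union_Ioi_eq_Ioi hT.le,
    lintegral_union measurableSet_Ioi (Ioc_disjoint_Ioi le_rfl)]
  refine add_le_add ?_ ?_
  · calc _ ≤ ∫⁻ t in Ioc 0 (2 * vv n * m), volume N := by
          apply lintegral_mono
          intro t
          apply measure_mono
          intro x hx
          by_contra hxN
          simp [hN x hxN] at hx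
      _ = _ := by simp [mul_comm]
  · have e : ∀ x, h x / m = (2 * vv n * h x) / (2 * vv n * m) := by
      intro x; field_simp
    simp_rw [e]
    rw [lnp_swap n ν (fun x => 2 * vv n * h x) (hh.const_mul _)
      (fun x => mul_nonneg (by positivity) (h0 x)) _ hT, ← lintegral_const_mul' _ _ ENNReal.ofReal_ne_top]
    apply setLIntegral_mono' measurableSet_Ioi
    intro t ht
    have ht : 0 < t := hT.trans ht
    set S : Set (En n) := {x | t < 2 * vv n * h x} with hSdef
    have hS : MeasurableSet S := measurableSet_lt measurable_const (hh.const_mul _)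
    have hsub : ∀ x, MM n ν x ≤ MM n (ν.restrict S) x + ENNReal.ofReal (t / 2) := by
      intro x
      apply MM_le
      intro r hr0 hr1
      rw [← measure_inter_add_sdiff _ hS, mul_add]
      refine add_le_add ?_ ?_
      · rw [← Measure.restrict_apply measurableSet_ball]
        exact le_MM n _ x hr0 hr1
      · rw [hν, withDensity_apply _ (measurableSet_ball.diff hS)]
        calc _ ≤ ∫⁻ y in ball x r \ S, ENNReal.ofReal (t / (2 * vv n)) := by
              apply setLIntegral_mono' (measurableSet_ball.diff hS)
              intro y hy
              apply ENNReal.ofReal_le_ofReal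
              have := hy.2
              simp only [hSdef, mem_ofPred_eq, not_lt] at this
              rw [le_div_iff₀ (by positivity)]
              linarith
          _ ≤ ENNReal.ofReal (t / (2 * vv n)) * volume (ball x r) := by
              rw [setLIntegral_const]
              gcongr
              exact sdiff_subset
          _ = _ := by
              rw [vol_ball n x hr0, ← ENNReal.ofReal_mul (by positivity),
                ← ENNReal.ofReal_mul (by positivity)]
              congr 1
              field_simp
    have hw := weak n (ν.restrict S) (ENNReal.ofReal (t / 2)) (by simpa using ht) ENNReal.ofReal_ne_top
    rw [Measure.restrict_apply_univ] at hw
    have hle : volume {x | ENNReal.ofReal t < MM n ν x} ≤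
        volume {x | ENNReal.ofReal (t / 2) < MM n (ν.restrict S) x} := by
      apply measure_mono
      intro x hx
      simp only [mem_ofPred_eq] at hx ⊢
      by_contra hc
      push Not at hc
      have := hx.trans_le ((hsub x).trans (add_le_add_left hc _))
      rw [← ENNReal.ofReal_add (by positivity) (by positivity)] at this
      simp at this
    refine hle.trans ?_
    rw [mul_comm, ← ENNReal.le_div_iff_mul_le (Or.inl (by simpa using ht)) (Or.inl ENNReal.ofReal_ne_top)] at hw
    refine hw.trans (le_of_eq ?_)
    rw [div_eq_mul_inv, ← ENNReal.ofReal_inv_of_pos (by positivity), ← mul_assoc,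
      ← ENNReal.ofReal_mul (by positivity), mul_right_comm, ← ENNReal.ofReal_mul (by positivity)]
    congr 2
    field_simp

lemma lnp_mul (a b : ℝ) (ha : 0 ≤ a) (hb : 0 < b) : lnp (a * b) ≤ lnp a + lnp b := by
  unfold lnp
  rcases ha.eq_or_lt with rfl | ha
  · simp
  · rw [Real.log_mul ha.ne' hb.ne']
    apply max_le
    · exact add_le_add (le_max_left _ _) (le_max_left _ _)
    · exact add_nonneg (le_max_right _ _) (le_max_right _ _)

lemma lnp_nonneg (a : ℝ) : 0 ≤ lnp a := le_max_right _ _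

lemma lnp_meas : Measurable lnp := Real.measurable_log.max measurable_const

lemma claimB (n : ℕ) : ∃ C : ℝ≥0∞, C ≠ ⊤ ∧ ∀ (h : En n → ℝ) (_ : Measurable h) (_ : ∀ x, 0 ≤ h x)
    (ν : Measure (En n)) (_ : IsFiniteMeasure ν)
    (_ : ν = volume.withDensity (fun x => ENNReal.ofReal (h x))) (m : ℝ) (_ : 0 < m)
    (_ : ν univ = ENNReal.ofReal m),
    ν univ + ∫⁻ x, ENNReal.ofReal (lnp (h x / m)) ∂ν ≤ C * ∫⁻ x, MM n ν x := by
  have hv := vv_pos n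
  set A : ℝ := 4 ^ n / vv n with hA
  set c : ℝ := (1 / 2) ^ n * vv n with hc
  have hApos : 0 < A := by positivity
  have hcpos : 0 < c := by positivity
  refine ⟨ENNReal.ofReal (5 ^ n) * (ENNReal.ofReal c)⁻¹ +
    (1 + ENNReal.ofReal (lnp A)) * (ENNReal.ofReal (vv n))⁻¹, ?_, ?_⟩
  · have : (ENNReal.ofReal c)⁻¹ ≠ ⊤ := by simpa using hcpos
    have : (ENNReal.ofReal (vv n))⁻¹ ≠ ⊤ := by simpa using hv
    finiteness
  intro h hh h0 ν _ hν m hm hmν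
  have h1 : ν univ ≤ (ENNReal.ofReal (vv n))⁻¹ * ∫⁻ x, MM n ν x := by
    have := dens_le n _ hh.ennreal_ofReal ν hν
    rwa [mul_comm, ← ENNReal.le_div_iff_mul_le (Or.inl (by simpa using hv)) (Or.inl ENNReal.ofReal_ne_top),
      ENNReal.div_eq_inv_mul] at this
  have h2 : ∫⁻ x, ENNReal.ofReal (lnp (h x / (A * m))) ∂ν ≤
      ENNReal.ofReal (5 ^ n) * (ENNReal.ofReal c)⁻¹ * ∫⁻ x, MM n ν x := by
    rw [lnp_swap n ν h hh h0 _ (by positivity), mul_assoc, ← lintegral_const_mul _ (MM_meas n ν),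
      layer n _ ((MM_meas n ν).const_mul _), ← lintegral_const_mul' _ _ ENNReal.ofReal_ne_top]
    calc _ ≤ ∫⁻ t in Ioi (A * m), ENNReal.ofReal (5 ^ n) *
            volume {x | ENNReal.ofReal t < (ENNReal.ofReal c)⁻¹ * MM n ν x} := by
          apply setLIntegral_mono' measurableSet_Ioi
          intro t ht
          have ht' : A * m < t := ht
          have ht : 0 < t := lt_trans (by positivity) ht'
          have hl := lower n _ hh.ennreal_ofReal ν hν t ht (by
            rw [hmν]
            apply ENNReal.ofReal_le_ofReal
            have : A * ((1 / 4) ^ n * vv n) = 1 := by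
              rw [hA]; field_simp; rw [← mul_pow]; norm_num
            calc m = A * m * ((1 / 4) ^ n * vv n) := by linear_combination (-m) * this
              _ ≤ _ := by gcongr)
          have e1 : {x | ENNReal.ofReal t < ENNReal.ofReal (h x)} = {x | t < h x} := by
            ext x
            simp only [mem_ofPred_eq]
            rw [ENNReal.ofReal_lt_ofReal_iff']
            exact ⟨fun h => h.1, fun h => ⟨h, ht.trans h⟩⟩
          have e2 : {x | ENNReal.ofReal t < (ENNReal.ofReal c)⁻¹ * MM n ν x} =
              {x | ENNReal.ofReal (t * c) < MM n ν x} := by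
            ext x
            simp only [mem_ofPred_eq]
            rw [← ENNReal.div_eq_inv_mul, ENNReal.lt_div_iff_mul_lt
              (Or.inl (by simpa using hcpos)) (Or.inl ENNReal.ofReal_ne_top),
              ENNReal.ofReal_mul ht.le]
          rw [e1] at hl
          rw [e2]
          calc _ ≤ ENNReal.ofReal (1 / t) * (ENNReal.ofReal (t * 5 ^ n) *
                volume {x | ENNReal.ofReal (t * c) < MM n ν x}) := by gcongr
            _ = _ := by
              rw [← mul_assoc, ← ENNReal.ofReal_mul (by positivity)]
              congr 2
              field_simp
      _ ≤ _ := by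
          apply lintegral_mono_set
          apply Ioi_subset_Ioi
          positivity
  have h3 : ∫⁻ x, ENNReal.ofReal (lnp (h x / m)) ∂ν ≤
      ∫⁻ x, ENNReal.ofReal (lnp (h x / (A * m))) ∂ν + ENNReal.ofReal (lnp A) * ν univ := by
    rw [← lintegral_const, ← lintegral_add_right _ measurable_const]
    apply lintegral_mono
    intro x
    simp only
    rw [← ENNReal.ofReal_add (lnp_nonneg _) (lnp_nonneg _)]
    apply ENNReal.ofReal_le_ofReal
    have := lnp_mul (h x / (A * m)) A (div_nonneg (h0 x) (by positivity)) hApos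
    have e : h x / (A * m) * A = h x / m := by field_simp
    rwa [e] at this
  calc _ ≤ ν univ + (∫⁻ x, ENNReal.ofReal (lnp (h x / (A * m))) ∂ν + ENNReal.ofReal (lnp A) * ν univ) := by
        gcongr
    _ = ∫⁻ x, ENNReal.ofReal (lnp (h x / (A * m))) ∂ν + (1 + ENNReal.ofReal (lnp A)) * ν univ := by ring
    _ ≤ ENNReal.ofReal (5 ^ n) * (ENNReal.ofReal c)⁻¹ * (∫⁻ x, MM n ν x) + (1 + ENNReal.ofReal (lnp A)) *
        ((ENNReal.ofReal (vv n))⁻¹ * ∫⁻ x, MM n ν x) := by gcongr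
    _ = _ := by ring

/-- enlarged cube -/
def Nk (n : ℕ) (k : Fin n → ℤ) : Set (En n) := {x | ∀ i, |x i - (k i : ℝ)| < 3 / 2}

lemma Qk_meas (n : ℕ) (k : Fin n → ℤ) : MeasurableSet (Qk n k) := by
  have : Qk n k = ⋂ i, ({x : En n | (k i : ℝ) - 1/2 < x i} ∩ {x : En n | x i < (k i : ℝ) + 1/2}) := by
    ext x; simp [Qk]
  rw [this]
  refine MeasurableSet.iInter fun i => ?_
  have hm : Measurable (fun x : En n => x i) := by fun_prop
  exact (measurableSet_lt measurable_const hm).inter (measurableSet_lt hm measurable_const)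

lemma Nk_meas (n : ℕ) (k : Fin n → ℤ) : MeasurableSet (Nk n k) := by
  have : Nk n k = ⋂ i, {x : En n | |x i - (k i : ℝ)| < 3 / 2} := by
    ext x; simp [Nk]
  rw [this]
  refine MeasurableSet.iInter fun i => ?_
  have hm : Measurable (fun x : En n => |x i - (k i : ℝ)|) := by fun_prop
  exact (measurableSet_lt hm measurable_const)

lemma Nk_vol (n : ℕ) (k : Fin n → ℤ) : volume (Nk n k) = ENNReal.ofReal (3 ^ n) := by
  have e : Nk n k = (WithLp.ofLp : En n → (Fin n → ℝ)) ⁻¹' (Set.pi univ fun i =>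
      Ioo ((k i : ℝ) - 3 / 2) ((k i : ℝ) + 3 / 2)) := by
    ext x
    simp only [Nk, mem_ofPred_eq, mem_preimage, Set.mem_pi, mem_univ, true_imp_iff, mem_Ioo, abs_lt]
    refine forall_congr' fun i => ?_
    constructor <;> rintro ⟨h1, h2⟩ <;> constructor <;> linarith
  rw [e, (PiLp.volume_preserving_ofLp (Fin n)).measure_preimage
    (MeasurableSet.univ_pi fun i => measurableSet_Ioo).nullMeasurableSet, Real.volume_pi_Ioo]
  have : ∀ i, (k i : ℝ) + 3 / 2 - ((k i : ℝ) - 3 / 2) = 3 := fun i => by ring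
  simp [this, ENNReal.ofReal_pow]

lemma Qk_cover (n : ℕ) : volume (⋃ k, Qk n k)ᶜ = 0 := by
  have hsub : (⋃ k, Qk n k)ᶜ ⊆ ⋃ i : Fin n, ⋃ j : ℤ, {x : En n | x i = (j : ℝ) - 1 / 2} := by
    intro x hx
    by_contra hc
    apply hx
    simp only [mem_iUnion, mem_ofPred_eq, not_exists] at hc
    rw [mem_iUnion]
    refine ⟨fun i => ⌊x i + 1 / 2⌋, fun i => ?_⟩
    have h1 := Int.floor_le (x i + 1 / 2)
    have h2 := Int.lt_floor_add_one (x i + 1 / 2)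
    refine ⟨lt_of_le_of_ne (by linarith) fun h => hc i _ h.symm, by linarith⟩
  refine measure_mono_null hsub ?_
  refine measure_iUnion_null fun i => measure_iUnion_null fun j => ?_
  have e : {x : En n | x i = (j : ℝ) - 1 / 2} = (WithLp.ofLp : En n → (Fin n → ℝ)) ⁻¹'
      {y | y i = (j : ℝ) - 1 / 2} := rfl
  rw [e, (PiLp.volume_preserving_ofLp (Fin n)).measure_preimage]
  · rw [volume_pi]; exact Measure.pi_hyperplane _ i _
  · exact (measurableSet_eq_fun (measurable_pi_apply i) measurable_const).nullMeasurableSet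

lemma Nk_count (n : ℕ) (x : En n) :
    ∑' k, (Nk n k).indicator (1 : En n → ℝ≥0∞) x ≤ (4 : ℝ≥0∞) ^ n := by
  set s : Finset (Fin n → ℤ) := Fintype.piFinset fun i => Finset.Icc (⌊x i⌋ - 1) (⌊x i⌋ + 2)
  rw [tsum_eq_sum (s := s)]
  · calc _ ≤ ∑ k ∈ s, (1 : ℝ≥0∞) := Finset.sum_le_sum fun k _ => indicator_le_self' (by simp) x
      _ = _ := by
        simp only [Finset.sum_const, s, Fintype.card_piFinset, Int.card_Icc]
        have : ∀ i, (⌊x i⌋ + 2 + 1 - (⌊x i⌋ - 1)).toNat = 4 := fun i => by omega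
        simp [this]
  · intro k hk
    rw [indicator_of_notMem]
    intro hx
    apply hk
    simp only [s, Fintype.mem_piFinset, Finset.mem_Icc]
    intro i
    have h := abs_lt.1 (hx i)
    have h1 := Int.floor_le (x i)
    have h2 := Int.lt_floor_add_one (x i)
    constructor
    · have : ((⌊x i⌋ : ℤ) : ℝ) - 2 < k i := by linarith
      have : ⌊x i⌋ - 2 < k i := by exact_mod_cast this
      omega
    · have : (k i : ℝ) < ((⌊x i⌋ : ℤ) : ℝ) + 3 := by linarith
      have : k i < ⌊x i⌋ + 3 := by exact_mod_cast this
      omega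

lemma MM_supp (n : ℕ) (ν : Measure (En n)) (k : Fin n → ℤ) (x : En n) (hx : x ∉ Nk n k) :
    MM n (ν.restrict (Qk n k)) x = 0 := by
  rw [← nonpos_iff_eq_zero]
  apply MM_le
  intro r h0 h1
  rw [Measure.restrict_apply measurableSet_ball]
  have : ball x r ∩ Qk n k = ∅ := by
    ext y
    simp only [mem_inter_iff, mem_empty_iff_false, iff_false, not_and]
    intro hy hyk
    apply hx
    intro i
    have h2 : |(y - x) i| ≤ ‖y - x‖ := by
      have := PiLp.norm_apply_le (y - x) i
      simpa using this
    rw [mem_ball, dist_eq_norm] at hy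
    have h3 := abs_le.1 h2
    have h4 := hyk i
    simp only [PiLp.sub_apply] at h3
    rw [abs_lt]
    constructor <;> linarith [h4.1, h4.2, h3.1, h3.2]
  rw [this]; simp

lemma MM_mono (n : ℕ) (ν : Measure (En n)) (s : Set (En n)) (x : En n) :
    MM n (ν.restrict s) x ≤ MM n ν x := by
  apply MM_le
  intro r h0 h1
  exact (Measure.restrict_apply_le _ _).trans (le_MM n ν x h0 h1)

lemma main_iff (n : ℕ) (h : En n → ℝ) (hh : Measurable h) (h0 : ∀ x, 0 ≤ h x)
    (ν : Measure (En n)) [IsFiniteMeasure ν]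
    (hν : ν = volume.withDensity (fun x => ENNReal.ofReal (h x)))
    (m : (Fin n → ℤ) → ℝ) (hm0 : ∀ k, 0 ≤ m k) (hm : ∀ k, ν (Qk n k) = ENNReal.ofReal (m k)) :
    ∫⁻ x, MM n ν x < ⊤ ↔
      ∑' k : Fin n → ℤ,
        ∫⁻ x in Qk n k, ENNReal.ofReal (h x * (1 + lnp (h x / m k))) < ⊤ := by
  have hv := vv_pos n
  set hk : (Fin n → ℤ) → En n → ℝ := fun k => (Qk n k).indicator h with hkdef
  have hkm : ∀ k, Measurable (hk k) := fun k => hh.indicator (Qk_meas n k)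
  have hk0 : ∀ k x, 0 ≤ hk k x := fun k x => indicator_nonneg (fun x _ => h0 x) x
  have hνk : ∀ k, ν.restrict (Qk n k) = volume.withDensity (fun x => ENNReal.ofReal (hk k x)) := by
    intro k
    have : (fun x => ENNReal.ofReal (hk k x)) = (Qk n k).indicator (fun x => ENNReal.ofReal (h x)) := by
      ext x
      by_cases hx : x ∈ Qk n k <;> simp [hkdef, hx]
    rw [this, withDensity_indicator (Qk_meas n k), hν, restrict_withDensity (Qk_meas n k)]
  have hterm : ∀ k, ∫⁻ x in Qk n k, ENNReal.ofReal (h x * (1 + lnp (h x / m k))) =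
      ν.restrict (Qk n k) univ +
        ∫⁻ x, ENNReal.ofReal (lnp (hk k x / m k)) ∂(ν.restrict (Qk n k)) := by
    intro k
    have e1 : ∫⁻ x, ENNReal.ofReal (lnp (hk k x / m k)) ∂(ν.restrict (Qk n k)) =
        ∫⁻ x in Qk n k, ENNReal.ofReal (lnp (h x / m k)) ∂ν := by
      apply setLIntegral_congr_fun (Qk_meas n k)
      intro x hx
      simp [hkdef, hx]
    have e2 : ν.restrict (Qk n k) univ = ∫⁻ x in Qk n k, 1 ∂ν := by simp
    have hlm : Measurable (fun x => ENNReal.ofReal (lnp (h x / m k))) :=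
      (lnp_meas.comp (hh.div_const _)).ennreal_ofReal
    have hone : Measurable (fun x => 1 + ENNReal.ofReal (lnp (h x / m k))) := measurable_const.add hlm
    rw [e1, e2, ← lintegral_add_right _ hlm, hν, restrict_withDensity (Qk_meas n k),
      lintegral_withDensity_eq_lintegral_mul _ hh.ennreal_ofReal hone]
    apply lintegral_congr
    intro x
    simp only [Pi.mul_apply]
    rw [ENNReal.ofReal_mul (h0 x), ENNReal.ofReal_add zero_le_one (lnp_nonneg _), ENNReal.ofReal_one]
  simp_rw [hterm]
  have hzero : ∀ k, m k = 0 → ν.restrict (Qk n k) = 0 := by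
    intro k hk
    rw [Measure.restrict_eq_zero, hm, hk, ENNReal.ofReal_zero]
  constructor
  · intro hfin
    obtain ⟨C, hC, hB⟩ := claimB n
    have hle : ∀ k, ν.restrict (Qk n k) univ +
        ∫⁻ x, ENNReal.ofReal (lnp (hk k x / m k)) ∂(ν.restrict (Qk n k)) ≤
        C * ∫⁻ x, (Nk n k).indicator 1 x * MM n ν x := by
      intro k
      rcases (hm0 k).eq_or_lt with h | h
      · rw [hzero k h.symm]; simp
      · refine (hB (hk k) (hkm k) (hk0 k) _ inferInstance (hνk k) (m k) h (by simp [hm])).trans ?_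
        gcongr with x
        by_cases hx : x ∈ Nk n k
        · simpa [hx] using MM_mono n ν _ x
        · simp [MM_supp n ν k x hx]
    calc _ ≤ ∑' k, C * ∫⁻ x, (Nk n k).indicator 1 x * MM n ν x := ENNReal.tsum_le_tsum hle
      _ = C * ∫⁻ x, ∑' k, (Nk n k).indicator 1 x * MM n ν x := by
        rw [ENNReal.tsum_mul_left, lintegral_tsum]
        intro k
        exact ((measurable_one.indicator (Nk_meas n k)).mul (MM_meas n ν)).aemeasurable
      _ ≤ C * ∫⁻ x, 4 ^ n * MM n ν x := by
        gcongr with x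
        rw [ENNReal.tsum_mul_right]
        gcongr
        exact Nk_count n x
      _ = C * (4 ^ n * ∫⁻ x, MM n ν x) := by rw [lintegral_const_mul _ (MM_meas n ν)]
      _ < ⊤ := by
        have := hfin.ne
        have h4 : (4 : ℝ≥0∞) ^ n ≠ ⊤ := ENNReal.pow_ne_top (by simp)
        exact ENNReal.mul_lt_top hC.lt_top (ENNReal.mul_lt_top h4.lt_top hfin)
  · intro hfin
    set C : ℝ≥0∞ := ENNReal.ofReal (2 * vv n) * ENNReal.ofReal (3 ^ n) +
      ENNReal.ofReal (2 * (5 ^ n * vv n)) with hC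
    have hCt : C < ⊤ := by
      rw [hC, ← ENNReal.ofReal_mul (by positivity), ← ENNReal.ofReal_add (by positivity) (by positivity)]
      exact ENNReal.ofReal_lt_top
    have hle : ∀ k, ∫⁻ x, MM n (ν.restrict (Qk n k)) x ≤ C * (ν.restrict (Qk n k) univ +
        ∫⁻ x, ENNReal.ofReal (lnp (hk k x / m k)) ∂(ν.restrict (Qk n k))) := by
      intro k
      rcases (hm0 k).eq_or_lt with h | h
      · rw [hzero k h.symm]
        have : ∀ x, MM n (0 : Measure (En n)) x = 0 := fun x => by
          rw [← nonpos_iff_eq_zero]; exact MM_le _ _ _ _ (by simp)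
        simp [this]
      · refine (claimA n (hk k) (hkm k) (hk0 k) _ (hνk k) (m k) h (Nk n k)
          (fun x hx => MM_supp n ν k x hx)).trans ?_
        rw [Nk_vol, mul_add]
        refine add_le_add ?_ ?_
        · rw [Measure.restrict_apply_univ, hm, ENNReal.ofReal_mul (by positivity), mul_right_comm]
          gcongr
          exact le_self_add
        · gcongr
          exact le_add_self
    have hsub : ∀ x, MM n ν x ≤ ∑' k, MM n (ν.restrict (Qk n k)) x := by
      intro x
      apply MM_le
      intro r hr0 hr1
      have hnull : ν (⋃ k, Qk n k)ᶜ = 0 := by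
        rw [hν]; exact withDensity_absolutelyContinuous _ _ (Qk_cover n)
      calc ν (ball x r) ≤ ν (⋃ k, ball x r ∩ Qk n k) := by
            rw [← inter_iUnion]
            apply measure_mono_ae
            filter_upwards [compl_mem_ae_iff.2 hnull] with y hy hyb
            rw [compl_compl] at hy
            exact ⟨hyb, hy⟩
        _ ≤ ∑' k, ν (ball x r ∩ Qk n k) := measure_iUnion_le _
        _ ≤ ∑' k, ENNReal.ofReal (r ^ n) * MM n (ν.restrict (Qk n k)) x := by
            apply ENNReal.tsum_le_tsum
            intro k
            rw [← Measure.restrict_apply measurableSet_ball]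
            exact le_MM n _ x hr0 hr1
        _ = _ := ENNReal.tsum_mul_left
    calc _ ≤ ∫⁻ x, ∑' k, MM n (ν.restrict (Qk n k)) x := lintegral_mono hsub
      _ = ∑' k, ∫⁻ x, MM n (ν.restrict (Qk n k)) x :=
        lintegral_tsum fun k => (MM_meas n _).aemeasurable
      _ ≤ ∑' k, C * _ := ENNReal.tsum_le_tsum hle
      _ = C * _ := ENNReal.tsum_mul_left
      _ < ⊤ := ENNReal.mul_lt_top hCt hfin

lemma MM_fin (n : ℕ) (ν : Measure (En n)) [IsFiniteMeasure ν] :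
    ∀ᵐ x ∂(volume : Measure (En n)), MM n ν x ≠ ⊤ := by
  rw [ae_iff]
  simp only [ne_eq, not_not]
  set K : ℝ≥0∞ := ENNReal.ofReal (5 ^ n * vv n) * ν univ with hK
  have hKt : K ≠ ⊤ := ENNReal.mul_ne_top ENNReal.ofReal_ne_top (measure_ne_top _ _)
  by_contra hne
  have hb : ∀ s : ℝ≥0∞, s ≠ 0 → s ≠ ⊤ → s * volume {x | MM n ν x = ⊤} ≤ K := by
    intro s h0 ht
    refine le_trans ?_ (weak n ν s h0 ht)
    refine mul_le_mul_right (measure_mono ?_) _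
    intro x hx
    have hx : MM n ν x = ⊤ := hx
    simp only [mem_ofPred_eq, hx]
    exact ht.lt_top
  have h1 : (⊤ : ℝ≥0∞) ≤ K / volume {x | MM n ν x = ⊤} := by
    apply le_of_forall_lt
    intro c hc
    have h2 := hb (c + 1) (by simp) (by simp [hc.ne])
    have hvt : volume {x | MM n ν x = ⊤} ≠ ⊤ := by
      have := hb 1 (by simp) (by simp)
      rw [one_mul] at this
      exact ne_top_of_le_ne_top hKt this
    rw [← ENNReal.le_div_iff_mul_le (Or.inl hne) (Or.inl hvt)] at h2
    exact lt_of_lt_of_le (ENNReal.lt_add_right hc.ne one_ne_zero) h2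
  rw [top_le_iff, ENNReal.div_eq_top] at h1
  rcases h1 with h | h
  · exact hne h.2
  · exact hKt h.1

/-- **Characterization of integrability of the local maximal function.**
For integrable `f`, `M^loc f ∈ L^1(ℝ^n)` iff
`∑_{k∈ℤ^n} ∫_{Q_k} |f_k| (1 + ln₊(|f_k|/μ_k)) < ∞`. -/
theorem local_stein_characterization (n : ℕ) (hn : 1 ≤ n) (f : En n → ℝ)
    (hf : Integrable f) :
    Integrable (Mloc n f) ↔
      ∑' k : Fin n → ℤ,
        ∫⁻ x in Qk n k, ENNReal.ofReal (|f x| * (1 + lnp (|f x| / muk n f k))) < ⊤ := by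
  set h : En n → ℝ := fun x => |hf.1.mk f x| with hdef
  have hh : Measurable h := hf.1.stronglyMeasurable_mk.measurable.abs
  have hae : ∀ᵐ x, |f x| = h x := by
    filter_upwards [hf.1.ae_eq_mk] with x hx
    rw [hdef, hx]
  have h0 : ∀ x, 0 ≤ h x := fun x => abs_nonneg _
  set ν : Measure (En n) := volume.withDensity (fun x => ENNReal.ofReal (h x)) with hν
  have hint : Integrable h := hf.abs.congr hae
  have hfin : IsFiniteMeasure ν := isFiniteMeasure_withDensity_ofReal hint.2
  have hset : ∀ s : Set (En n), MeasurableSet s →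
      ν s = ENNReal.ofReal (∫ x in s, |f x|) := by
    intro s hs
    rw [hν, withDensity_apply _ hs, setIntegral_congr_ae hs (hae.mono fun x hx _ => hx),
      ofReal_integral_eq_lintegral_ofReal hint.integrableOn (Filter.Eventually.of_forall h0)]
  have hM : Mloc n f = fun x => (MM n ν x).toReal := by
    ext x
    unfold Mloc MM
    rw [ENNReal.toReal_iSup]
    · congr 1
      ext r
      have hr : 0 < (r : ℝ) ^ n := pow_pos r.2.1 n
      rw [ENNReal.toReal_mul, ENNReal.toReal_inv, ENNReal.toReal_ofReal hr.le,
        hset _ measurableSet_ball, ENNReal.toReal_ofReal (integral_nonneg fun x => abs_nonneg _)]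
    · intro r
      have hr : 0 < (r : ℝ) ^ n := pow_pos r.2.1 n
      refine ENNReal.mul_ne_top ?_ (measure_ne_top _ _)
      simpa using hr
  have hterm : ∀ k, ∫⁻ x in Qk n k, ENNReal.ofReal (|f x| * (1 + lnp (|f x| / muk n f k))) =
      ∫⁻ x in Qk n k, ENNReal.ofReal (h x * (1 + lnp (h x / muk n f k))) := by
    intro k
    apply lintegral_congr_ae
    filter_upwards [ae_restrict_of_ae hae] with x hx
    rw [hx]
  simp_rw [hterm]
  rw [← main_iff n h hh h0 ν hν (muk n f) (fun k => integral_nonneg fun x => abs_nonneg _)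
    (fun k => hset _ (Qk_meas n k)), hM, integrable_toReal_iff (MM_meas n ν).aemeasurable (MM_fin n ν),
    lt_top_iff_ne_top]
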